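/- In the Černý automaton C_n (n ≥ 3), for every i ∈ Z_n there exist a word w over {a, b} of length at most n and a state q ∈ Z_n such that δ_w⁻¹({q}) = {i, i+1 mod n}. Consequently, the two-element subsets of Z_n occurring as preimages of singletons under words are exactly the n cyclically adjacent pairs {i, i+1 mod n}, i ∈ Z_n. -/

import Mathlib

/-- The two-letter alphabet of the Černý automaton. -/
inductive Letter
  | a
  | b
deriving DecidableEq

/-- The action of a letter of the Černý automaton `C_n` on the state set `ZMod n`:
`a` sends `i` to `i + 1 (mod n)`, and `b` sends `n - 1` to `0` and fixes every other state. -/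
def step (n : ℕ) : Letter → ZMod n → ZMod n
  | Letter.a, p => p + 1
  | Letter.b, p => if p = -1 then 0 else p

/-- The map `δ_w` induced by a word `w`, applying letters left to right. -/
def run (n : ℕ) : List Letter → ZMod n → ZMod n
  | [], p => p
  | x :: w, p => run n w (step n x p)

/-!
Call a subset of the cycle an arc if one enters it at most once when going around. Singletons are
arcs, and preimages of arcs under either letter are arcs: `a` is a rotation, and taking preimages
under `b` can only delete an entry or shift it from `-1` back to `-2`. Hence every preimage of a
singleton under a word is an arc, and a two-element arc is a pair `{i, i + 1}`. Conversely, `b` has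
the fibre `{-1, 0}` over `0`, and a rotation by at most `n - 1` carries `{i, i + 1}` onto it.
-/

section Arc

variable {G : Type*} [AddGroup G] [One G] {S : Set G}

/-- The entry points of `S`: the points just outside `S` from which the unit step `p ↦ p + 1` leads
into `S`. They are used to count the maximal cyclic intervals of a proper subset of `ZMod n`. -/
def entries (S : Set G) : Set G := {p | p ∉ S ∧ p + 1 ∈ S}

/-- A cyclic interval of `ZMod n`, encoded as a set entered at most once along the cycle.
The empty set and the whole cycle are arcs. -/
def IsArc (S : Set G) : Prop := (entries S).Subsingleton

theorem isArc_singleton (q : G) : IsArc {q} :=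
  fun _ hp _ hp' ↦ add_right_cancel (hp.2.trans hp'.2.symm)

theorem IsArc.exists_eq_pair [NeZero (1 : G)] (hS : IsArc S) (hcard : S.ncard = 2) :
    ∃ i, S = {i, i + 1} := by
  obtain ⟨x, y, hxy, rfl⟩ := Set.ncard_eq_two.mp hcard
  by_cases hyx : x - 1 = y
  · exact ⟨y, by rw [← hyx, sub_add_cancel, Set.pair_comm]⟩
  by_cases hxy' : y - 1 = x
  · exact ⟨x, by rw [← hxy', sub_add_cancel]⟩
  have hx : x - 1 ∈ entries {x, y} := by simp [entries, hyx]
  have hy : y - 1 ∈ entries {x, y} := by simp [entries, hxy']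
  exact absurd (sub_left_injective (hS hx hy)) hxy

end Arc

section Preimages

variable {n : ℕ} {S : Set (ZMod n)}

theorem IsArc.preimage_step_a (hS : IsArc S) : IsArc (step n Letter.a ⁻¹' S) :=
  Set.Subsingleton.preimage hS (add_left_injective 1)

theorem step_b_neg_one : step n Letter.b (-1) = 0 := if_pos rfl

theorem step_b_of_ne {p : ZMod n} (hp : p ≠ -1) : step n Letter.b p = p := if_neg hp

theorem step_b_zero : step n Letter.b 0 = 0 := ite_self 0

theorem step_b_preimage_zero : step n Letter.b ⁻¹' {0} = {-1, 0} := by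
  ext p
  by_cases hp : p = -1
  · simp [hp, step_b_neg_one]
  · simp [hp, step_b_of_ne hp]

theorem neg_one_notMem_entries_preimage_step_b :
    -1 ∉ entries (step n Letter.b ⁻¹' S) := by
  simp [entries, step_b_neg_one, step_b_zero]

theorem mem_entries_of_mem_entries_preimage_step_b {p : ZMod n}
    (hp : p ∈ entries (step n Letter.b ⁻¹' S)) :
    p ∈ entries S ∨ p + 1 = -1 ∧ -1 ∈ entries S := by
  have hp_ne : p ≠ -1 := ne_of_mem_of_not_mem hp neg_one_notMem_entries_preimage_step_b
  obtain ⟨hpS, hpS'⟩ := hp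
  rw [Set.mem_preimage, step_b_of_ne hp_ne] at hpS
  rw [Set.mem_preimage] at hpS'
  by_cases hp_succ : p + 1 = -1
  · rw [hp_succ, step_b_neg_one] at hpS'
    by_cases hS : -1 ∈ S
    · exact .inl ⟨hpS, hp_succ ▸ hS⟩
    · exact .inr ⟨hp_succ, hS, by rwa [neg_add_cancel]⟩
  · rw [step_b_of_ne hp_succ] at hpS'
    exact .inl ⟨hpS, hpS'⟩

theorem IsArc.preimage_step_b (hS : IsArc S) : IsArc (step n Letter.b ⁻¹' S) := by
  intro p hp q hq
  have hp_ne : p ≠ -1 := ne_of_mem_of_not_mem hp neg_one_notMem_entries_preimage_step_b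
  have hq_ne : q ≠ -1 := ne_of_mem_of_not_mem hq neg_one_notMem_entries_preimage_step_b
  rcases mem_entries_of_mem_entries_preimage_step_b hp with hpS | ⟨hp_succ, hS₁⟩ <;>
    rcases mem_entries_of_mem_entries_preimage_step_b hq with hqS | ⟨hq_succ, hS₂⟩
  · exact hS hpS hqS
  · exact absurd (hS hpS hS₂) hp_ne
  · exact absurd (hS hqS hS₁) hq_ne
  · exact add_right_cancel (hp_succ.trans hq_succ.symm)

theorem IsArc.preimage_run (hS : IsArc S) (w : List Letter) : IsArc (run n w ⁻¹' S) := by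
  induction w with
  | nil => exact hS
  | cons x w ih =>
    cases x with
    | a => exact ih.preimage_step_a
    | b => exact ih.preimage_step_b

end Preimages

section Words

variable (n : ℕ)

theorem run_append (u v : List Letter) (p : ZMod n) :
    run n (u ++ v) p = run n v (run n u p) := by
  induction u generalizing p with
  | nil => rfl
  | cons x _ ih => exact ih (step n x p)

theorem run_replicate_a (k : ℕ) (p : ZMod n) : run n (List.replicate k Letter.a) p = p + k := by
  induction k generalizing p with
  | zero => simp [run]
  | succ k ih =>
    calc run n (List.replicate (k + 1) Letter.a) p = p + 1 + k := ih (p + 1)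
      _ = p + (k + 1 : ℕ) := by push_cast; ring

theorem run_replicate_a_append_b_preimage_zero (k : ℕ) :
    run n (List.replicate k Letter.a ++ [Letter.b]) ⁻¹' {0} = {-1 - (k : ZMod n), -(k : ZMod n)} :=
  calc run n (List.replicate k Letter.a ++ [Letter.b]) ⁻¹' {0}
    _ = (· + (k : ZMod n)) ⁻¹' (step n Letter.b ⁻¹' {0}) := by
      ext p
      simp only [Set.mem_preimage, run_append, run_replicate_a, run]
    _ = (· + (k : ZMod n)) ⁻¹' {-1, 0} := by rw [step_b_preimage_zero]
    _ = {-1 - (k : ZMod n), -(k : ZMod n)} := by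
      ext p
      simp [eq_sub_iff_add_eq, eq_neg_iff_add_eq_zero]

theorem exists_length_le_preimage_zero_eq_pair [NeZero n] (i : ZMod n) :
    ∃ w : List Letter, w.length ≤ n ∧ run n w ⁻¹' {0} = {i, i + 1} := by
  refine ⟨List.replicate (-1 - i).val Letter.a ++ [Letter.b], ?_, ?_⟩
  · simpa using (-1 - i).val_lt
  · rw [run_replicate_a_append_b_preimage_zero, ZMod.natCast_zmod_val, sub_sub_cancel, neg_sub,
      sub_neg_eq_add]

end Words

/-- In the Černý automaton `C_n` (`n ≥ 3`), for every `i ∈ ZMod n` there are a word `w`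
of length at most `n` and a state `q` whose singleton preimage under `δ_w` is
`{i, i + 1}`. Consequently, the two-element subsets of `ZMod n` occurring as preimages
of singletons under words are exactly the `n` cyclically adjacent pairs `{i, i + 1}`. -/
theorem cerny_adjacent_pairs_are_preimages (n : ℕ) (hn : 3 ≤ n) :
    (∀ i : ZMod n, ∃ w : List Letter, w.length ≤ n ∧
      ∃ q : ZMod n, {p : ZMod n | run n w p = q} = {i, i + 1}) ∧
    (∀ S : Set (ZMod n),
      ((∃ w : List Letter, ∃ q : ZMod n, {p : ZMod n | run n w p = q} = S) ∧ S.ncard = 2)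
        ↔ ∃ i : ZMod n, S = {i, i + 1}) := by
  have : Fact (1 < n) := ⟨by lia⟩
  have : NeZero n := ⟨by lia⟩
  refine ⟨fun i ↦ ?_, fun S ↦ ⟨?_, ?_⟩⟩
  · obtain ⟨w, hw_length, hw⟩ := exists_length_le_preimage_zero_eq_pair n i
    exact ⟨w, hw_length, 0, hw⟩
  · rintro ⟨⟨w, q, rfl⟩, hcard⟩
    exact ((isArc_singleton q).preimage_run w).exists_eq_pair hcard
  · rintro ⟨i, rfl⟩
    obtain ⟨w, -, hw⟩ := exists_length_le_preimage_zero_eq_pair n i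
    exact ⟨⟨w, 0, hw⟩, Set.ncard_pair (by simp)⟩
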